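/- Assume Schanuel's Conjecture. In the setup described, every finite subset T ⊆ S satisfying D(T) = D·|T| has cardinality |T| ≤ δ₁ + δ₂. -/

import Mathlib

open Complex Set

noncomputable section

/-- `f` is an exponential polynomial, i.e. an element of the ring `𝓔`. -/
def IsExpPoly (f : ℂ → ℂ) : Prop :=
  ∃ (N : ℕ) (lam mu : Fin N → ℂ),
    ∀ z : ℂ, f z = ∑ i, lam i * Complex.exp (mu i * z)

/-- `h` divides `f` in the ring `𝓔`. -/
def EDvd (h f : ℂ → ℂ) : Prop :=
  ∃ q : ℂ → ℂ, IsExpPoly q ∧ f = h * q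

/-- `f` is a unit of the ring `𝓔`. -/
def EUnit (f : ℂ → ℂ) : Prop :=
  IsExpPoly f ∧ ∃ g : ℂ → ℂ, IsExpPoly g ∧ f * g = 1

/-- `f` is irreducible in the ring `𝓔`. -/
def EIrreducible (f : ℂ → ℂ) : Prop :=
  IsExpPoly f ∧ f ≠ 0 ∧ ¬ EUnit f ∧
    ∀ g h : ℂ → ℂ, IsExpPoly g → IsExpPoly h → f = g * h → EUnit g ∨ EUnit h

/-- canonical representation: pairwise distinct exponents, nonzero coefficients. -/
def IsCanonicalRep (f : ℂ → ℂ) {N : ℕ} (lam mu : Fin N → ℂ) : Prop :=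
  (∀ i, lam i ≠ 0) ∧ Function.Injective mu ∧
    ∀ z : ℂ, f z = ∑ i, lam i * Complex.exp (mu i * z)

/-- `f` is a simple exponential polynomial: its support has `ℚ`-dimension 1. -/
def IsSimple (f : ℂ → ℂ) : Prop :=
  ∃ (N : ℕ) (lam mu : Fin N → ℂ), IsCanonicalRep f lam mu ∧
    Module.finrank ℚ (Submodule.span ℚ (Set.range mu)) = 1

/-- Transcendence degree over `ℚ` of (the field generated by) a set of complex numbers. -/
noncomputable def trdegQ (s : Set ℂ) : Cardinal.{0} :=
  ⨆ t : {t : Finset ℂ // ↑t ⊆ s ∧ AlgebraicIndependent ℚ (Subtype.val : {x : ℂ // x ∈ t} → ℂ)},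
    (t.1.card : Cardinal)

/-- Schanuel's Conjecture. -/
def SchanuelConjecture : Prop :=
  ∀ (n : ℕ) (lam : Fin n → ℂ), LinearIndependent ℚ lam →
    (n : Cardinal) ≤ trdegQ (Set.range lam ∪ Set.range fun i => Complex.exp (lam i))

/-!
Let `K` be the field generated by the coefficients. Up to a unit, `f` and `g` are polynomials
`F`, `G` over `K` in the functions `e^{b_i z}`, and a polynomial dividing both `F` and `G` gives a
common divisor of `f` and `g` in `𝓔`, hence a unit, which has no zeros. So at a common zero `s`
the ideal of polynomials vanishing at `x = (e^{b_i s})_i` is not principal. By Gauss's lemma it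
would be principal if all the `x_i` except at most one were algebraically independent over `K`;
therefore `x` has transcendence degree at most `D - 2` over `K`.

If the `D·|T|` numbers `b_i s` with `s ∈ T` are linearly independent, Schanuel's conjecture bounds
from below by `D·|T|` the transcendence degree of the field generated by them and their
exponentials. This field is algebraic over the one generated by the coefficients, the exponents,
`T`, and at most `D - 2` of the numbers `e^{b_i s}` for each `s ∈ T`, so that
`D·|T| ≤ δ₁ + δ₂ + |T| + (D - 2)·|T|`.
-/

open AlgebraicIndependent (matroid)
open scoped Finset

/-! ### Exponential polynomials -/

lemma IsExpPoly.of_fintype {ι : Type*} [Fintype ι] {f : ℂ → ℂ} (lam mu : ι → ℂ)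
    (h : ∀ z, f z = ∑ i, lam i * exp (mu i * z)) : IsExpPoly f := by
  let e := Fintype.equivFin ι
  refine ⟨Fintype.card ι, lam ∘ e.symm, mu ∘ e.symm, fun z => ?_⟩
  rw [h, ← e.symm.sum_comp]
  rfl

lemma isExpPoly_const_mul_exp (c a : ℂ) : IsExpPoly fun z => c * exp (a * z) :=
  ⟨1, fun _ => c, fun _ => a, fun z => by simp⟩

lemma IsExpPoly.add {f g : ℂ → ℂ} (hf : IsExpPoly f) (hg : IsExpPoly g) : IsExpPoly (f + g) := by
  obtain ⟨N, a, m, h⟩ := hf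
  obtain ⟨N', a', m', h'⟩ := hg
  exact .of_fintype (Sum.elim a a') (Sum.elim m m') fun z => by simp [h, h']

lemma IsExpPoly.mul {f g : ℂ → ℂ} (hf : IsExpPoly f) (hg : IsExpPoly g) : IsExpPoly (f * g) := by
  obtain ⟨N, a, m, h⟩ := hf
  obtain ⟨N', a', m', h'⟩ := hg
  refine .of_fintype (fun p : Fin N × Fin N' => a p.1 * a' p.2) (fun p => m p.1 + m' p.2)
    fun z => ?_
  simp only [Pi.mul_apply, h, h', Finset.sum_mul_sum, Fintype.sum_prod_type, add_mul,
    Complex.exp_add, mul_mul_mul_comm]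

lemma EUnit.mul {f g : ℂ → ℂ} (hf : EUnit f) (hg : EUnit g) : EUnit (f * g) := by
  obtain ⟨hf, f', hf', hff'⟩ := hf
  obtain ⟨hg, g', hg', hgg'⟩ := hg
  exact ⟨hf.mul hg, f' * g', hf'.mul hg', by rw [mul_mul_mul_comm, hff', hgg', one_mul]⟩

lemma EUnit.exists_mul_eq_one {u : ℂ → ℂ} (hu : EUnit u) : ∃ v, EUnit v ∧ u * v = 1 := by
  obtain ⟨hu, v, hv, huv⟩ := hu
  exact ⟨v, ⟨hv, u, hu, by rw [mul_comm, huv]⟩, huv⟩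

lemma EUnit.apply_ne_zero {u : ℂ → ℂ} (hu : EUnit u) (z : ℂ) : u z ≠ 0 := by
  obtain ⟨-, v, -, huv⟩ := hu
  exact left_ne_zero_of_mul_eq_one (congrFun huv z)

lemma eUnit_exp (c : ℂ) : EUnit fun z => exp (c * z) := by
  refine ⟨by simpa using isExpPoly_const_mul_exp 1 c, fun z => exp (-c * z),
    by simpa using isExpPoly_const_mul_exp 1 (-c), ?_⟩
  funext z
  simp [← Complex.exp_add]

lemma edvd_of_mul_eq_unit_mul {p q u f : ℂ → ℂ} (hq : IsExpPoly q) (hu : EUnit u)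
    (h : p * q = u * f) : EDvd p f := by
  obtain ⟨v, hv, huv⟩ := hu.exists_mul_eq_one
  refine ⟨q * v, hq.mul hv.1, ?_⟩
  calc f = u * v * f := by rw [huv, one_mul]
    _ = u * f * v := mul_right_comm u v f
    _ = p * (q * v) := by rw [← h, mul_assoc]

/-- `f` and `g` are relatively prime in the ring `𝓔`: all their common divisors are units. -/
def ERelPrime (f g : ℂ → ℂ) : Prop :=
  ∀ p : ℂ → ℂ, IsExpPoly p → EDvd p f → EDvd p g → EUnit p

lemma EIrreducible.eRelPrime {f g : ℂ → ℂ} (hf : EIrreducible f) (hg : EIrreducible g)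
    (hfg : ¬ ∃ u : ℂ → ℂ, EUnit u ∧ f = u * g) : ERelPrime f g := by
  rintro p hp ⟨q, hq, rfl⟩ ⟨r, hr, rfl⟩
  by_contra hpu
  have hqu : EUnit q := (hf.2.2.2 p q hp hq rfl).resolve_left hpu
  have hru : EUnit r := (hg.2.2.2 p r hp hr rfl).resolve_left hpu
  obtain ⟨r', hr', hrr'⟩ := hru.exists_mul_eq_one
  refine hfg ⟨q * r', hqu.mul hr', ?_⟩
  calc p * q = p * q * (r * r') := by rw [hrr', mul_one]
    _ = q * r' * (p * r) := by ring

/-! ### Polynomials in exponentials -/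

section ExpEval

variable {ι K : Type*} [Field K] [Algebra K ℂ]

/-- The exponential polynomial obtained from a polynomial over `K` by substituting `e^{b i z}` for
the `i`-th variable, as an algebra homomorphism into the ring of all functions `ℂ → ℂ`. -/
def expEval (b : ι → ℂ) : MvPolynomial ι K →ₐ[K] ℂ → ℂ :=
  MvPolynomial.aeval fun i z => exp (b i * z)

lemma expEval_X (b : ι → ℂ) (i : ι) :
    expEval b (MvPolynomial.X i : MvPolynomial ι K) = fun z => exp (b i * z) :=
  MvPolynomial.aeval_X _ i

lemma expEval_C (b : ι → ℂ) (a : K) : expEval b (MvPolynomial.C a) = fun _ => algebraMap K ℂ a :=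
  MvPolynomial.aeval_C _ a

lemma expEval_apply (b : ι → ℂ) (P : MvPolynomial ι K) (z : ℂ) :
    expEval b P z = MvPolynomial.aeval (fun i => exp (b i * z)) P := by
  change ((Pi.evalAlgHom K (fun _ : ℂ => ℂ) z).comp (expEval b)) P = _
  congr 1
  ext i
  simp [expEval_X]

lemma isExpPoly_expEval (b : ι → ℂ) (P : MvPolynomial ι K) : IsExpPoly (expEval b P) := by
  induction P using MvPolynomial.induction_on with
  | C a =>
    rw [expEval_C]
    simpa using isExpPoly_const_mul_exp (algebraMap K ℂ a) 0
  | add P Q hP hQ => simpa only [map_add] using hP.add hQ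
  | mul_X P i hP =>
    simpa only [map_mul, expEval_X, one_mul] using hP.mul (isExpPoly_const_mul_exp 1 (b i))

lemma ERelPrime.expEval_apply_ne_zero {b : ι → ℂ} {f g u v : ℂ → ℂ} {F G P : MvPolynomial ι K}
    (hfg : ERelPrime f g) (hu : EUnit u) (hF : expEval b F = u * f) (hv : EUnit v)
    (hG : expEval b G = v * g) (hPF : P ∣ F) (hPG : P ∣ G) (z : ℂ) : expEval b P z ≠ 0 := by
  obtain ⟨Q, rfl⟩ := hPF
  obtain ⟨R, rfl⟩ := hPG
  rw [map_mul] at hF hG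
  exact (hfg _ (isExpPoly_expEval b P)
    (edvd_of_mul_eq_unit_mul (isExpPoly_expEval b Q) hu hF)
    (edvd_of_mul_eq_unit_mul (isExpPoly_expEval b R) hv hG)).apply_ne_zero z

variable (K) in
lemma exists_expEval_eq_exp {b : ι → ℂ} {nu : ℂ} (hnu : nu ∈ AddSubmonoid.closure (range b)) :
    ∃ P : MvPolynomial ι K, expEval b P = fun z => exp (nu * z) := by
  induction hnu using AddSubmonoid.closure_induction with
  | mem _ h =>
    obtain ⟨i, rfl⟩ := h
    exact ⟨MvPolynomial.X i, expEval_X b i⟩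
  | zero => exact ⟨1, by funext z; simp⟩
  | add _ _ _ _ hP hQ =>
    obtain ⟨P, hP⟩ := hP
    obtain ⟨Q, hQ⟩ := hQ
    refine ⟨P * Q, ?_⟩
    funext z
    simp [hP, hQ, add_mul, Complex.exp_add]

lemma exists_sub_eq_of_mem_addSubgroupClosure {G : Type*} [AddCommGroup G] {s : Set G} {a : G}
    (ha : a ∈ AddSubgroup.closure s) :
    ∃ p ∈ AddSubmonoid.closure s, ∃ q ∈ AddSubmonoid.closure s, p - q = a := by
  induction ha using AddSubgroup.closure_induction with
  | mem a ha => exact ⟨a, AddSubmonoid.subset_closure ha, 0, zero_mem _, sub_zero a⟩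
  | zero => exact ⟨0, zero_mem _, 0, zero_mem _, sub_zero 0⟩
  | add _ _ _ _ hx hy =>
    obtain ⟨p, hp, q, hq, rfl⟩ := hx
    obtain ⟨p', hp', q', hq', rfl⟩ := hy
    exact ⟨p + p', add_mem hp hp', q + q', add_mem hq hq', add_sub_add_comm p p' q q'⟩
  | neg _ _ hx =>
    obtain ⟨p, hp, q, hq, rfl⟩ := hx
    exact ⟨q, hq, p, hp, (neg_sub p q).symm⟩

lemma exists_forall_add_mem_addSubmonoidClosure {G κ : Type*} [AddCommGroup G] [Finite κ]
    {s : Set G} {a : κ → G} (ha : ∀ k, a k ∈ AddSubgroup.closure s) :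
    ∃ c, ∀ k, c + a k ∈ AddSubmonoid.closure s := by
  classical
  cases nonempty_fintype κ
  choose p hp q hq hpq using fun k => exists_sub_eq_of_mem_addSubgroupClosure (ha k)
  refine ⟨∑ k, q k, fun k => ?_⟩
  rw [← hpq k, ← Finset.sum_erase_add _ _ (Finset.mem_univ k), add_assoc, add_sub_cancel]
  exact add_mem (sum_mem fun j _ => hq j) (hp k)

lemma exists_expEval_eq_unit_mul {κ : Type*} [Fintype κ] {b : ι → ℂ} {f : ℂ → ℂ} {lam mu : κ → ℂ}
    (hf : ∀ z, f z = ∑ k, lam k * exp (mu k * z)) (hlam : ∀ k, lam k ∈ range (algebraMap K ℂ))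
    (hmu : ∀ k, mu k ∈ AddSubgroup.closure (range b)) :
    ∃ (F : MvPolynomial ι K) (u : ℂ → ℂ), EUnit u ∧ expEval b F = u * f := by
  obtain ⟨c, hc⟩ := exists_forall_add_mem_addSubmonoidClosure hmu
  choose P hP using fun k => exists_expEval_eq_exp K (hc k)
  choose a ha using hlam
  refine ⟨∑ k, MvPolynomial.C (a k) * P k, fun z => exp (c * z), eUnit_exp c, ?_⟩
  funext z
  simp only [map_sum, map_mul, expEval_C, hP, ha, Finset.sum_apply, Pi.mul_apply, hf,
    Finset.mul_sum, add_mul, Complex.exp_add, mul_left_comm]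

end ExpEval

/-! ### Vanishing ideals of points of small codimension -/

section VanishingIdeal

variable {K L : Type*} [Field K] [Field L] [Algebra K L]

lemma dvd_of_prime_of_aeval_eq_zero {A : Type*} [CommRing A] [IsDomain A]
    [UniqueFactorizationMonoid A] [Algebra A L] [FaithfulSMul A L] {x : L} {P G : Polynomial A}
    (hP : Prime P) (hPx : Polynomial.aeval x P = 0) (hGx : Polynomial.aeval x G = 0) : P ∣ G := by
  have hdeg : P.natDegree ≠ 0 := by
    intro h
    obtain ⟨a, rfl⟩ := Polynomial.natDegree_eq_zero.1 h
    rw [Polynomial.aeval_C, map_eq_zero_iff _ (FaithfulSMul.algebraMap_injective A L)] at hPx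
    exact hP.ne_zero (by rw [hPx, Polynomial.C_0])
  have hprim : P.IsPrimitive := hP.irreducible.isPrimitive hdeg
  let := FractionRing.liftAlgebra A L
  have := FractionRing.isScalarTower_liftAlgebra A L
  have hirr : Irreducible (P.map (algebraMap A (FractionRing A))) :=
    hprim.irreducible_iff_irreducible_map_fraction_map.1 hP.irreducible
  have hminpoly_dvd {Q : Polynomial A} (hQ : Polynomial.aeval x Q = 0) :
      minpoly (FractionRing A) x ∣ Q.map (algebraMap A (FractionRing A)) :=
    minpoly.dvd _ _ (by rwa [Polynomial.aeval_map_algebraMap])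
  have hassoc : Associated (P.map (algebraMap A (FractionRing A))) (minpoly (FractionRing A) x) :=
    (hirr.dvd_iff.1 (hminpoly_dvd hPx)).resolve_left (minpoly.not_isUnit _ _)
  exact hprim.dvd_of_fraction_map_dvd_fraction_map (hassoc.dvd.trans (hminpoly_dvd hGx))

lemma isPrincipal_ker_polynomial_aeval {A : Type*} [CommRing A] [IsDomain A]
    [UniqueFactorizationMonoid A] [Algebra A L] [FaithfulSMul A L] (x : L) :
    (RingHom.ker (Polynomial.aeval (R := A) x)).IsPrincipal := by
  rcases eq_or_ne (RingHom.ker (Polynomial.aeval (R := A) x)) ⊥ with hbot | hbot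
  · exact hbot ▸ bot_isPrincipal
  obtain ⟨P, hPx, hP⟩ := (RingHom.ker_isPrime _).exists_mem_prime_of_ne_bot hbot
  refine ⟨P, le_antisymm (fun G hG => ?_) ((Ideal.span_singleton_le_iff_mem _).2 hPx)⟩
  exact Ideal.mem_span_singleton.2 (dvd_of_prime_of_aeval_eq_zero hP hPx hG)

lemma isPrincipal_ker_of_comp_equiv {R S T : Type*} [CommRing R] [CommRing S] [CommRing T]
    (e : R ≃+* S) {φ : R →+* T} {ψ : S →+* T} (hφ : ∀ r, ψ (e r) = φ r)
    (hψ : (RingHom.ker ψ).IsPrincipal) : (RingHom.ker φ).IsPrincipal := by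
  have hker : RingHom.ker φ = (RingHom.ker ψ).comap e := by
    ext r
    simp only [RingHom.mem_ker, Ideal.mem_comap, hφ]
  rw [hker, ← Ideal.map_symm]
  exact hψ.map_ringHom e.symm

lemma isPrincipal_ker_aeval_optionElim {τ : Type*} {x : τ → L} (hx : AlgebraicIndependent K x)
    (a : L) :
    (RingHom.ker (MvPolynomial.aeval (R := K) fun o : Option τ => o.elim a x)).IsPrincipal := by
  have : UniqueFactorizationMonoid (Algebra.adjoin K (range x)) :=
    hx.aevalEquiv.toMulEquiv.uniqueFactorizationMonoid inferInstance
  exact isPrincipal_ker_of_comp_equiv hx.mvPolynomialOptionEquivPolynomialAdjoin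
    (RingHom.congr_fun (hx.aeval_comp_mvPolynomialOptionEquivPolynomialAdjoin a))
    (isPrincipal_ker_polynomial_aeval a)

lemma isPrincipal_ker_aeval_of_algebraicIndepOn_compl {σ : Type*} {x : σ → L} {j : σ}
    (hj : AlgebraicIndepOn K x {j}ᶜ) :
    (RingHom.ker (MvPolynomial.aeval (R := K) x)).IsPrincipal := by
  classical
  let e := Equiv.optionSubtypeNe j
  have helim : (fun o => Option.elim o (x j) fun i : {i // i ≠ j} => x i) ∘ e.symm = x := by
    rw [Equiv.comp_symm_eq]
    funext o
    cases o <;> simp [e]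
  refine isPrincipal_ker_of_comp_equiv (MvPolynomial.renameEquiv K e.symm).toRingEquiv (fun P => ?_)
    (isPrincipal_ker_aeval_optionElim hj (x j))
  exact (MvPolynomial.aeval_rename e.symm _ P).trans
    (congrArg (fun y => MvPolynomial.aeval y P) helim)

lemma compl_nontrivial_of_not_isPrincipal_ker_aeval {σ : Type*} {x : σ → L} {I : Set σ}
    (hx : ¬ (RingHom.ker (MvPolynomial.aeval (R := K) x)).IsPrincipal)
    (hI : AlgebraicIndepOn K x I) : Iᶜ.Nontrivial := by
  by_contra hIc
  rcases (not_nontrivial_iff.1 hIc).eq_empty_or_singleton with hempty | ⟨j, hj⟩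
  · have hindep : AlgebraicIndependent K x := by
      rw [compl_empty_iff] at hempty
      subst hempty
      exact hI.comp (fun i => ⟨i, mem_univ i⟩) fun _ _ => congrArg Subtype.val
    rw [(RingHom.injective_iff_ker_eq_bot _).1 hindep] at hx
    exact hx bot_isPrincipal
  · rw [compl_eq_comm, eq_comm] at hj
    subst hj
    exact hx (isPrincipal_ker_aeval_of_algebraicIndepOn_compl hI)

lemma exists_finset_card_add_two_le_of_not_isPrincipal_ker_aeval {σ : Type*} [Fintype σ]
    {x : σ → L} (hx : ¬ (RingHom.ker (MvPolynomial.aeval (R := K) x)).IsPrincipal) :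
    ∃ B : Finset L, #B + 2 ≤ Fintype.card σ ∧ range x ⊆ (matroid K L).closure B := by
  classical
  obtain ⟨B, hB⟩ := (matroid K L).exists_isBasis (range x)
  obtain ⟨I, rfl, hxI⟩ := exists_image_eq_injOn_of_subset_range hB.subset
  have hI : AlgebraicIndepOn K x I := (algebraicIndependent_image hxI).2 hB.indep
  have hcompl : 1 < Iᶜ.ncard :=
    one_lt_ncard_iff_nontrivial.2 (compl_nontrivial_of_not_isPrincipal_ker_aeval hx hI)
  refine ⟨I.toFinset.image x, ?_, by simpa using hB.subset_closure⟩
  calc #(I.toFinset.image x) + 2 ≤ #I.toFinset + 2 := by gcongr; exact Finset.card_image_le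
    _ ≤ I.ncard + Iᶜ.ncard := by rw [ncard_eq_toFinset_card']; gcongr; exact hcompl
    _ = Fintype.card σ := by rw [ncard_add_ncard_compl, Nat.card_eq_fintype_card]

end VanishingIdeal

/-! ### Transcendence degree as matroid rank -/

open IntermediateField in
lemma closure_matroid_adjoin {F E : Type*} [Field F] [Field E] [Algebra F E] (C B : Set E) :
    (matroid (adjoin F C) E).closure B = (matroid F E).closure (C ∪ B) := by
  ext a
  simp only [AlgebraicIndependent.matroid_closure_eq, SetLike.mem_coe,
    Subalgebra.mem_algebraicClosure, ← isAlgebraic_adjoin_iff]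
  rw [← adjoin_adjoin_left]
  rfl

lemma eRk_le_natCast_iff {α : Type*} {M : Matroid α} {X : Set α} {n : ℕ} :
    M.eRk X ≤ n ↔ ∀ t : Finset α, ↑t ⊆ X → M.Indep t → #t ≤ n := by
  constructor
  · intro h t htX ht
    have := (ht.encard_le_eRk_of_subset htX).trans h
    rwa [encard_coe_eq_coe_finsetCard, Nat.cast_le] at this
  · intro h
    by_contra! hlt
    obtain ⟨I, hIX, hI, hcard⟩ := Matroid.le_eRk_iff.1 (Order.add_one_le_of_lt hlt)
    have hfin : I.Finite := finite_of_encard_eq_coe (k := n + 1) hcard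
    lift I to Finset α using hfin
    rw [encard_coe_eq_coe_finsetCard] at hcard
    have : #I = n + 1 := by exact_mod_cast hcard
    have := h I hIX hI
    lia

lemma toENat_trdegQ (C : Set ℂ) : Cardinal.toENat (trdegQ C) = (matroid ℚ ℂ).eRk C := by
  refine eq_of_forall_ge_iff fun m => ?_
  induction m with
  | top => simp
  | coe n =>
    rw [Cardinal.toENat_le_natCast, eRk_le_natCast_iff, trdegQ,
      ciSup_le_iff' Cardinal.bddAbove_of_small]
    simp only [Subtype.forall, and_imp, Nat.cast_le]
    rfl

lemma SchanuelConjecture.card_le_eRk (hSC : SchanuelConjecture) {ι : Type*} [Fintype ι]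
    {v : ι → ℂ} (hv : LinearIndependent ℚ v) :
    Fintype.card ι ≤ (matroid ℚ ℂ).eRk (range v ∪ range fun i => exp (v i)) := by
  let e := (Fintype.equivFin ι).symm
  have h := hSC _ (v ∘ e) (hv.comp e e.injective)
  have hexp : (range fun i => exp ((v ∘ e) i)) = range fun i => exp (v i) :=
    e.surjective.range_comp fun i => exp (v i)
  rwa [← Cardinal.natCast_le_toENat, toENat_trdegQ, e.surjective.range_comp, hexp] at h

lemma addSubgroupClosure_subset_matroid_closure {F E : Type*} [Field F] [Field E] [Algebra F E]
    (C : Set E) : (AddSubgroup.closure C : Set E) ⊆ (matroid F E).closure C := by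
  have hC : C ⊆ (matroid F E).closure C := (matroid F E).subset_closure C
  rw [AlgebraicIndependent.matroid_closure_eq] at hC ⊢
  let A := Subalgebra.algebraicClosure (Algebra.adjoin F C) E
  exact (AddSubgroup.closure_le A.toSubring.toAddSubgroup).2 hC

lemma mul_mem_matroid_closure {F E : Type*} [Field F] [Field E] [Algebra F E] {C : Set E} {x y : E}
    (hx : x ∈ (matroid F E).closure C) (hy : y ∈ (matroid F E).closure C) :
    x * y ∈ (matroid F E).closure C := by
  rw [AlgebraicIndependent.matroid_closure_eq] at hx hy ⊢
  exact mul_mem hx hy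

/-! ### Counting -/

lemma card_biUnion_add_card_mul_le {α κ : Type*} [DecidableEq α] [Fintype κ] {B : κ → Finset α}
    {c d : ℕ} (hB : ∀ k, #(B k) + c ≤ d) :
    #(Finset.univ.biUnion B) + Fintype.card κ * c ≤ Fintype.card κ * d :=
  calc #(Finset.univ.biUnion B) + Fintype.card κ * c
      ≤ ∑ k, #(B k) + Fintype.card κ * c := by gcongr; exact Finset.card_biUnion_le
    _ = ∑ k, (#(B k) + c) := by simp [Finset.sum_add_distrib]
    _ ≤ ∑ _k : κ, d := Finset.sum_le_sum fun k _ => hB k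
    _ = Fintype.card κ * d := by simp

lemma linearIndependent_mul_of_finrank_span_eq {ι k A : Type*} [Fintype ι] [Field k] [Ring A]
    [Algebra k A] {b : ι → A} {T : Finset A}
    (h : Module.finrank k (Submodule.span k {x | ∃ i, ∃ s ∈ T, x = b i * s}) =
      Fintype.card ι * #T) :
    LinearIndependent k fun p : ι × T => b p.1 * p.2 := by
  have hrange : range (fun p : ι × T => b p.1 * p.2) = {x | ∃ i, ∃ s ∈ T, x = b i * s} := by
    ext x
    simp [eq_comm]
  rw [linearIndependent_iff_card_eq_finrank_span, Set.finrank, hrange, h, Fintype.card_prod,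
    Fintype.card_coe]

/-! ### Common zeros -/

section CommonZeros

variable {ι κ κ' : Type*} [Fintype κ] [Fintype κ'] {f g : ℂ → ℂ} {b : ι → ℂ}
  {lam mu : κ → ℂ} {l em : κ' → ℂ}

lemma ERelPrime.not_isPrincipal_ker_aeval {K : Type*} [Field K] [Algebra K ℂ] {u v : ℂ → ℂ}
    {F G : MvPolynomial ι K} {s : ℂ} (hfg : ERelPrime f g) (hu : EUnit u)
    (hF : expEval b F = u * f) (hv : EUnit v) (hG : expEval b G = v * g) (hfs : f s = 0)
    (hgs : g s = 0) :
    ¬ (RingHom.ker (MvPolynomial.aeval (R := K) fun i => exp (b i * s))).IsPrincipal := by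
  rintro ⟨P, hP⟩
  have hdvd {Q : MvPolynomial ι K} (hQ : expEval b Q s = 0) : P ∣ Q := by
    rw [← Ideal.mem_span_singleton, Ideal.span, ← hP, RingHom.mem_ker]
    rwa [expEval_apply] at hQ
  have hPs : P ∈ RingHom.ker (MvPolynomial.aeval (R := K) fun i => exp (b i * s)) :=
    hP ▸ Ideal.mem_span_singleton_self P
  refine hfg.expEval_apply_ne_zero hu hF hv hG (hdvd ?_) (hdvd ?_) s
    ((expEval_apply b P s).trans hPs)
  · rw [hF, Pi.mul_apply, hfs, mul_zero]
  · rw [hG, Pi.mul_apply, hgs, mul_zero]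

lemma ERelPrime.exists_finset_range_exp_subset_closure [Fintype ι] (hfg : ERelPrime f g)
    (hf : ∀ z, f z = ∑ k, lam k * exp (mu k * z)) (hg : ∀ z, g z = ∑ k, l k * exp (em k * z))
    (hmu : range mu ∪ range em ⊆ AddSubgroup.closure (range b)) {s : ℂ} (hfs : f s = 0)
    (hgs : g s = 0) :
    ∃ B : Finset ℂ, #B + 2 ≤ Fintype.card ι ∧
      (range fun i => exp (b i * s)) ⊆ (matroid ℚ ℂ).closure (range lam ∪ range l ∪ B) := by
  let K := IntermediateField.adjoin ℚ (range lam ∪ range l)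
  have hK {c : ℂ} (hc : c ∈ range lam ∪ range l) : c ∈ range (algebraMap K ℂ) :=
    ⟨⟨c, IntermediateField.subset_adjoin ℚ _ hc⟩, rfl⟩
  obtain ⟨F, u, hu, hF⟩ := exists_expEval_eq_unit_mul (K := K) hf
    (fun k => hK (.inl (mem_range_self k))) fun k => hmu (.inl (mem_range_self k))
  obtain ⟨G, v, hv, hG⟩ := exists_expEval_eq_unit_mul (K := K) hg
    (fun k => hK (.inr (mem_range_self k))) fun k => hmu (.inr (mem_range_self k))
  obtain ⟨B, hcard, hB⟩ := exists_finset_card_add_two_le_of_not_isPrincipal_ker_aeval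
    (hfg.not_isPrincipal_ker_aeval hu hF hv hG hfs hgs)
  exact ⟨B, hcard, hB.trans_eq (closure_matroid_adjoin _ _)⟩

end CommonZeros

lemma eRk_range_mul_union_range_exp_le {ι : Type*} {b : ι → ℂ} {T W : Finset ℂ} {C₁ C₂ : Set ℂ}
    {δ₁ δ₂ : ℕ} (hδ₁ : trdegQ C₁ = δ₁) (hδ₂ : trdegQ C₂ = δ₂)
    (hb : range b ⊆ AddSubgroup.closure C₂)
    (hexp : ∀ s ∈ T, ∀ i, exp (b i * s) ∈ (matroid ℚ ℂ).closure (C₁ ∪ W)) :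
    (matroid ℚ ℂ).eRk (range (fun p : ι × T => b p.1 * p.2) ∪
      range fun p : ι × T => exp (b p.1 * p.2)) ≤ δ₁ + δ₂ + #T + #W := by
  have hsub : range (fun p : ι × T => b p.1 * p.2) ∪ (range fun p : ι × T => exp (b p.1 * p.2)) ⊆
      (matroid ℚ ℂ).closure (C₁ ∪ C₂ ∪ T ∪ W) := by
    rw [union_subset_iff, range_subset_iff, range_subset_iff]
    refine ⟨fun p => mul_mem_matroid_closure ?_ ?_, fun p => ?_⟩
    · have hC₂ : C₂ ⊆ C₁ ∪ C₂ ∪ T ∪ W := fun _ h => .inl (.inl (.inr h))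
      exact (matroid ℚ ℂ).closure_subset_closure hC₂
        (addSubgroupClosure_subset_matroid_closure C₂ (hb (mem_range_self p.1)))
    · exact (matroid ℚ ℂ).mem_closure_of_mem' (.inl (.inr p.2.2))
    · have hC₁W : C₁ ∪ W ⊆ C₁ ∪ C₂ ∪ T ∪ W := by
        gcongr
        exact fun _ h => .inl (.inl h)
      exact (matroid ℚ ℂ).closure_subset_closure hC₁W (hexp p.2 p.2.2 p.1)
  have hC₁ : (matroid ℚ ℂ).eRk C₁ = δ₁ := by rw [← toENat_trdegQ, hδ₁, map_natCast]
  have hC₂ : (matroid ℚ ℂ).eRk C₂ = δ₂ := by rw [← toENat_trdegQ, hδ₂, map_natCast]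
  calc _ ≤ (matroid ℚ ℂ).eRk (C₁ ∪ C₂ ∪ T ∪ W) :=
        ((matroid ℚ ℂ).eRk_mono hsub).trans_eq ((matroid ℚ ℂ).eRk_closure_eq _)
    _ ≤ (matroid ℚ ℂ).eRk C₁ + (matroid ℚ ℂ).eRk C₂ + (T : Set ℂ).encard + (W : Set ℂ).encard := by
        grw [Matroid.eRk_union_le_eRk_add_encard, Matroid.eRk_union_le_eRk_add_encard,
          Matroid.eRk_union_le_eRk_add_eRk]
    _ = δ₁ + δ₂ + #T + #W := by simp only [hC₁, hC₂, encard_coe_eq_coe_finsetCard]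

theorem card_le_of_max_dimension_general (hSC : SchanuelConjecture) {ι κ κ' : Type*} [Finite ι]
    [Fintype κ] [Fintype κ'] {f g : ℂ → ℂ} {lam mu : κ → ℂ} {l em : κ' → ℂ} {b : ι → ℂ}
    (hf : ∀ z, f z = ∑ k, lam k * exp (mu k * z)) (hg : ∀ z, g z = ∑ k, l k * exp (em k * z))
    (hfg : ERelPrime f g)
    (hbgen : AddSubgroup.closure (range mu ∪ range em) = AddSubgroup.closure (range b))
    {δ₁ δ₂ : ℕ} (hδ₁ : trdegQ (range lam ∪ range l) = δ₁) (hδ₂ : trdegQ (range mu ∪ range em) = δ₂)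
    {T : Finset ℂ} (hT : ∀ s ∈ T, f s = 0 ∧ g s = 0)
    (hbT : LinearIndependent ℚ fun p : ι × T => b p.1 * p.2) : #T ≤ δ₁ + δ₂ := by
  cases nonempty_fintype ι
  have hmu : range mu ∪ range em ⊆ AddSubgroup.closure (range b) :=
    hbgen ▸ AddSubgroup.subset_closure
  have hb : range b ⊆ AddSubgroup.closure (range mu ∪ range em) :=
    hbgen ▸ AddSubgroup.subset_closure
  choose B hBcard hB using fun s : T =>
    hfg.exists_finset_range_exp_subset_closure hf hg hmu (hT s s.2).1 (hT s s.2).2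
  let W := Finset.univ.biUnion B
  have hW : #W + #T * 2 ≤ #T * Fintype.card ι := by
    simpa only [Fintype.card_coe] using card_biUnion_add_card_mul_le hBcard
  have hexp : ∀ s ∈ T, ∀ i, exp (b i * s) ∈ (matroid ℚ ℂ).closure (range lam ∪ range l ∪ W) := by
    intro s hs i
    have hBW : (B ⟨s, hs⟩ : Set ℂ) ⊆ W := Finset.subset_biUnion_of_mem B (Finset.mem_univ _)
    exact (matroid ℚ ℂ).closure_subset_closure (union_subset_union_right _ hBW)
      (hB ⟨s, hs⟩ (mem_range_self i))
  have hrank : Fintype.card ι * #T ≤ δ₁ + δ₂ + #T + #W := by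
    have := (hSC.card_le_eRk hbT).trans (eRk_range_mul_union_range_exp_le hδ₁ hδ₂ hb hexp)
    rw [Fintype.card_prod, Fintype.card_coe] at this
    exact_mod_cast this
  linarith

/-- Assuming Schanuel's Conjecture: any finite `T ⊆ S` with `D(T) = D·|T|` has
`|T| ≤ δ₁ + δ₂`. -/
theorem card_le_of_max_dimension (hSC : SchanuelConjecture)
    (f g : ℂ → ℂ) (N M : ℕ) (lam mu : Fin N → ℂ) (l em : Fin M → ℂ)
    (hfrep : IsCanonicalRep f lam mu) (hgrep : IsCanonicalRep g l em)
    (hfirr : EIrreducible f) (hgirr : EIrreducible g)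
    (hdist : ¬ ∃ u : ℂ → ℂ, EUnit u ∧ f = u * g)
    (S : Set ℂ) (hSinf : S.Infinite)
    (hS : ∀ s ∈ S, s ≠ 0 ∧ f s = 0 ∧ g s = 0)
    (D : ℕ) (b : Fin D → ℂ)
    (hD : Module.finrank ℚ (Submodule.span ℚ (Set.range mu ∪ Set.range em)) = D)
    (hbli : LinearIndependent ℤ b)
    (hbgen : AddSubgroup.closure (Set.range mu ∪ Set.range em) =
      AddSubgroup.closure (Set.range b))
    (δ₁ δ₂ : ℕ)
    (hδ₁ : trdegQ (Set.range lam ∪ Set.range l) = (δ₁ : Cardinal))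
    (hδ₂ : trdegQ (Set.range mu ∪ Set.range em) = (δ₂ : Cardinal))
    (T : Finset ℂ) (hTS : ↑T ⊆ S)
    (hDT : Module.finrank ℚ
        (Submodule.span ℚ {x : ℂ | ∃ i : Fin D, ∃ s ∈ T, x = b i * s}) = D * T.card) :
    T.card ≤ δ₁ + δ₂ := by
  exact card_le_of_max_dimension_general hSC hfrep.2.2 hgrep.2.2 (hfirr.eRelPrime hgirr hdist) hbgen
    hδ₁ hδ₂ (fun s hs => (hS s (hTS hs)).2)
    (linearIndependent_mul_of_finrank_span_eq (by rw [hDT, Fintype.card_fin]))
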